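/- Let (A, 𝔪, k) be a Cohen-Macaulay commutative Noetherian local ring. Then a finitely generated A-module has reducible complexity if and only if it has free reducible complexity; that is, the categories C^rc_A and C^frc_A coincide. -/

import Mathlib

open CategoryTheory Opposite Filter IsLocalRing

universe u

namespace ComplexityTest

variable (A : Type u) [CommRing A] [IsLocalRing A]

structure MinFreeRes (M : Type u) [AddCommGroup M] [Module A M] : Type u where
  b : ℕ → ℕ
  d : (n : ℕ) → ((Fin (b (n + 1)) → A) →ₗ[A] (Fin (b n) → A))
  aug : (Fin (b 0) → A) →ₗ[A] M
  aug_surjective : Function.Surjective aug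
  exact_zero : Function.Exact (d 0) aug
  exact_succ : ∀ n, Function.Exact (d (n + 1)) (d n)
  minimal : ∀ n x i, d n x i ∈ maximalIdeal A

variable (M : Type u) [AddCommGroup M] [Module A M]

def HasComplexityLE (t : ℕ) : Prop :=
  ∃ (R : MinFreeRes A M) (a : ℝ), ∀ᶠ n : ℕ in atTop, (R.b n : ℝ) ≤ a * (n : ℝ) ^ ((t : ℤ) - 1)

noncomputable def complexity : ℕ∞ :=
  sInf {c : ℕ∞ | ∃ t : ℕ, c = t ∧ HasComplexityLE A M t}

def HasProjDimLE (t : ℕ) : Prop :=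
  ∃ R : MinFreeRes A M, ∀ i, t < i → R.b i = 0

noncomputable def projDim : ℕ∞ :=
  sInf {c : ℕ∞ | ∃ t : ℕ, c = t ∧ HasProjDimLE A M t}

def HasFiniteProjDim : Prop :=
  ∃ t : ℕ, HasProjDimLE A M t

def IsSyzygyOf (S : Type u) [AddCommGroup S] [Module A S] : ℕ → Prop
  | 0 => Nonempty (S ≃ₗ[A] M)
  | 1 => ∃ R : MinFreeRes A M, Nonempty (S ≃ₗ[A] (LinearMap.ker R.aug))
  | (n + 2) => ∃ R : MinFreeRes A M, Nonempty (S ≃ₗ[A] (LinearMap.ker (R.d n)))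

variable {A M} in
def IsSES {K S : Type u} [AddCommGroup K] [Module A K] [AddCommGroup S] [Module A S]
    (f : M →ₗ[A] K) (g : K →ₗ[A] S) : Prop :=
  Function.Injective f ∧ Function.Exact f g ∧ Function.Surjective g

noncomputable def extModule (n : ℕ) (N : Type u) [AddCommGroup N] [Module A N] :
    ModuleCat A :=
  ((_root_.Ext A (ModuleCat.{u} A) n).obj (op (ModuleCat.of A M))).obj (ModuleCat.of A N)

def extVanish (n : ℕ) (N : Type u) [AddCommGroup N] [Module A N] : Prop :=
  Subsingleton (extModule A M n N)

/-- The `n`-th Tor module `Tor^A_n(M, N)`. -/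
noncomputable def torModule (n : ℕ) (N : Type u) [AddCommGroup N] [Module A N] :
    ModuleCat A :=
  ((Tor (ModuleCat.{u} A) n).obj (ModuleCat.of A M)).obj (ModuleCat.of A N)

/-- The vanishing `Tor^A_n(M, N) = 0`. -/
def torVanish (n : ℕ) (N : Type u) [AddCommGroup N] [Module A N] : Prop :=
  Subsingleton (torModule A M n N)

noncomputable def depth : ℕ∞ :=
  sInf {c : ℕ∞ | ∃ i : ℕ, c = i ∧ ¬ extVanish A (ResidueField A) i M}

variable {A}

/-- The category of modules of *free reducible complexity* over the local ring `A`.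
It is defined inductively: every finitely generated module of finite projective
dimension has free reducible complexity, and a finitely generated module `M` of finite
positive complexity has free reducible complexity provided there is a short exact
sequence `0 → M → K → Ω^n_A(M) → 0` (necessarily induced by a cohomology element
`η ∈ Ext^{n+1}_A(M,M)`) where `K` is a finitely generated module of free reducible
complexity with `cx K = cx M - 1`. -/
inductive HasFreeRedCxCat : ModuleCat.{u} A → Prop
  | of_finite_projDim (M : ModuleCat.{u} A) (hfg : Module.Finite A M)
      (h : HasFiniteProjDim A M) : HasFreeRedCxCat M
  | step (M K S : ModuleCat.{u} A) (n : ℕ)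
      (hfg : Module.Finite A M) (hKfg : Module.Finite A K)
      (hpos : 0 < complexity A M) (hfin : complexity A M ≠ ⊤)
      (hsyz : IsSyzygyOf A M S n)
      (f : M →ₗ[A] K) (g : K →ₗ[A] S) (hses : IsSES f g)
      (hcx : complexity A K = complexity A M - 1)
      (hK : HasFreeRedCxCat K) : HasFreeRedCxCat M

/-- The category of modules of *reducible complexity* over the local ring `A`: as for
free reducible complexity, but where in addition the reductions are required to
preserve depth. -/
inductive HasRedCxCat : ModuleCat.{u} A → Prop
  | of_finite_projDim (M : ModuleCat.{u} A) (hfg : Module.Finite A M)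
      (h : HasFiniteProjDim A M) : HasRedCxCat M
  | step (M K S : ModuleCat.{u} A) (n : ℕ)
      (hfg : Module.Finite A M) (hKfg : Module.Finite A K)
      (hpos : 0 < complexity A M) (hfin : complexity A M ≠ ⊤)
      (hsyz : IsSyzygyOf A M S n)
      (f : M →ₗ[A] K) (g : K →ₗ[A] S) (hses : IsSES f g)
      (hcx : complexity A K = complexity A M - 1)
      (hdepth : depth A K = depth A M)
      (hK : HasRedCxCat K) : HasRedCxCat M

variable (A)

/-- `M` has free reducible complexity. -/
def HasFreeRedCx (M : Type u) [AddCommGroup M] [Module A M] : Prop :=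
  HasFreeRedCxCat (ModuleCat.of A M)

/-- `M` has reducible complexity. -/
def HasRedCx (M : Type u) [AddCommGroup M] [Module A M] : Prop :=
  HasRedCxCat (ModuleCat.of A M)

/-- A Noetherian local ring is Gorenstein if it has finite injective dimension over
itself; by Bass' characterization, this is equivalent to the vanishing of
`Ext^i_A(k, A)` for all sufficiently large `i`. -/
def IsGorenstein : Prop :=
  ∃ n : ℕ, ∀ i : ℕ, n < i → extVanish A (ResidueField A) i A


/-- Vanishing of the `n`-th cohomology of `Hom(P, N)` in elementary terms. -/
def EV {A : Type u} [CommRing A] {k : ModuleCat.{u} A} (P : ProjectiveResolution k) (n : ℕ)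
    (N : Type u) [AddCommGroup N] [Module A N] : Prop :=
  ∀ f : P.complex.X n →ₗ[A] N, f ∘ₗ (P.complex.d (n + 1) n).hom = 0 →
    ∃ g : P.complex.X (n - 1) →ₗ[A] N, f = g ∘ₗ (P.complex.d n (n - 1)).hom

section EVlemmas

variable {B : Type u} [CommRing B] {k : ModuleCat.{u} B} (P : ProjectiveResolution k)
  {X Y Z : Type u} [AddCommGroup X] [Module B X] [AddCommGroup Y] [Module B Y]
  [AddCommGroup Z] [Module B Z]

lemma dd (a b c : ℕ) : (P.complex.d b c).hom ∘ₗ (P.complex.d a b).hom = 0 := by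
  rw [← ModuleCat.hom_comp, HomologicalComplex.d_comp_d]; rfl

lemma ext_iff_EV (n : ℕ) :
    Subsingleton (((_root_.Ext B (ModuleCat.{u} B) n).obj (op k)).obj (ModuleCat.of B X)) ↔
      EV P n X := by
  rw [← ModuleCat.isZero_iff_subsingleton]
  rw [(P.isoExt (R := B) n (ModuleCat.of B X)).isZero_iff,
    ← HomologicalComplex.exactAt_iff_isZero_homology,
    HomologicalComplex.exactAt_iff' _ (n - 1) n (n + 1) (by cases n <;> simp) (by simp),
    ShortComplex.moduleCat_exact_iff]
  constructor
  · intro h f hf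
    obtain ⟨g, hg⟩ := h (ModuleCat.ofHom f : P.complex.X n ⟶ ModuleCat.of B X) (by
      change P.complex.d (n + 1) n ≫ ModuleCat.ofHom f = 0
      ext1
      exact hf)
    have hg' : P.complex.d n (n - 1) ≫ (g : P.complex.X (n - 1) ⟶ ModuleCat.of B X)
      = ModuleCat.ofHom f := hg
    exact ⟨ModuleCat.Hom.hom (g : P.complex.X (n - 1) ⟶ ModuleCat.of B X),
      (congrArg ModuleCat.Hom.hom hg').symm⟩
  · intro h f hf
    have hf' : P.complex.d (n + 1) n ≫ (f : P.complex.X n ⟶ ModuleCat.of B X) = 0 := hf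
    obtain ⟨g, hg⟩ := h (ModuleCat.Hom.hom (f : P.complex.X n ⟶ ModuleCat.of B X)) 
      (congrArg ModuleCat.Hom.hom hf')
    refine ⟨(ModuleCat.ofHom g : P.complex.X (n - 1) ⟶ ModuleCat.of B X), ?_⟩
    change P.complex.d n (n - 1) ≫ ModuleCat.ofHom g = (f : P.complex.X n ⟶ ModuleCat.of B X)
    ext1
    exact hg.symm

lemma proj_lift (n : ℕ) (g : Y →ₗ[B] Z) (hg : Function.Surjective g)
    (f : P.complex.X n →ₗ[B] Z) : ∃ h : P.complex.X n →ₗ[B] Y, g ∘ₗ h = f := by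
  have : Module.Projective B (P.complex.X n) :=
    (IsProjective.iff_projective (P.complex.X n)).mpr (P.projective n)
  exact Module.projective_lifting_property g f hg

lemma ker_lift {W : Type u} [AddCommGroup W] [Module B W] {f : X →ₗ[B] Y} {g : Y →ₗ[B] Z}
    (h : IsSES f g) (e : W →ₗ[B] Y) (he : g ∘ₗ e = 0) : ∃ e' : W →ₗ[B] X, f ∘ₗ e' = e := by
  have hm : ∀ w, ∃ x, f x = e w := fun w => (h.2.1 (e w)).mp (LinearMap.congr_fun he w)
  choose c hc using hm
  refine ⟨{ toFun := c, map_add' := ?_, map_smul' := ?_ }, ?_⟩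
  · intro a b; apply h.1; simp [hc]
  · intro a b; apply h.1; simp [hc]
  · ext w; exact hc w

lemma ses_comp {f : X →ₗ[B] Y} {g : Y →ₗ[B] Z} (h : IsSES f g) : g ∘ₗ f = 0 := by
  ext x; exact (h.2.1 (f x)).mpr ⟨x, rfl⟩

lemma ses_cancel {W : Type u} [AddCommGroup W] [Module B W] {f : X →ₗ[B] Y} {g : Y →ₗ[B] Z}
    (h : IsSES f g) {e e' : W →ₗ[B] X} (he : f ∘ₗ e = f ∘ₗ e') : e = e' := by
  ext w; exact h.1 (LinearMap.congr_fun he w)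

lemma EV_mid {f : X →ₗ[B] Y} {g : Y →ₗ[B] Z} (h : IsSES f g) (n : ℕ)
    (hX : EV P n X) (hZ : EV P n Z) : EV P n Y := by
  intro a ha
  obtain ⟨b, hb⟩ := hZ (g ∘ₗ a) (by rw [LinearMap.comp_assoc, ha, LinearMap.comp_zero])
  obtain ⟨b', rfl⟩ := proj_lift P _ g h.2.2 b
  obtain ⟨e, he⟩ := ker_lift h (a - b' ∘ₗ (P.complex.d n (n - 1)).hom) (by
    rw [LinearMap.comp_sub, hb, LinearMap.comp_assoc, sub_self])
  obtain ⟨e', he'⟩ := hX e (by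
    apply ses_cancel h
    rw [← LinearMap.comp_assoc, he, LinearMap.sub_comp, ha, LinearMap.comp_assoc, dd]; simp)
  refine ⟨b' + f ∘ₗ e', ?_⟩
  rw [LinearMap.add_comp, LinearMap.comp_assoc, ← he', he]; abel

lemma EV_left_zero {f : X →ₗ[B] Y} (h : Function.Injective f) (hY : EV P 0 Y) : EV P 0 X := by
  intro a ha
  have hd : (P.complex.d 0 (0 - 1)).hom = 0 := by
    rw [P.complex.shape 0 (0 - 1) (by simp)]; rfl
  obtain ⟨b, hb⟩ := hY (f ∘ₗ a) (by rw [LinearMap.comp_assoc, ha, LinearMap.comp_zero])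
  refine ⟨0, ?_⟩
  rw [hd, LinearMap.comp_zero] at hb
  rw [LinearMap.zero_comp]
  ext w
  apply h
  simpa using LinearMap.congr_fun hb w

lemma EV_left_succ {f : X →ₗ[B] Y} {g : Y →ₗ[B] Z} (h : IsSES f g) (n : ℕ)
    (hY : EV P (n + 1) Y) (hZ : EV P n Z) : EV P (n + 1) X := by
  intro a ha
  obtain ⟨b, hb⟩ := hY (f ∘ₗ a) (by rw [LinearMap.comp_assoc, ha, LinearMap.comp_zero])
  change P.complex.X n →ₗ[B] Y at b
  change f ∘ₗ a = b ∘ₗ (P.complex.d (n + 1) n).hom at hb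
  obtain ⟨c, hc⟩ := hZ (g ∘ₗ b) (by
    rw [LinearMap.comp_assoc, ← hb, ← LinearMap.comp_assoc, ses_comp h, LinearMap.zero_comp])
  obtain ⟨c', rfl⟩ := proj_lift P _ g h.2.2 c
  obtain ⟨e, he⟩ := ker_lift h (b - c' ∘ₗ (P.complex.d n (n - 1)).hom) (by
    rw [LinearMap.comp_sub, hc, LinearMap.comp_assoc, sub_self])
  refine ⟨e, ?_⟩
  apply ses_cancel h
  change _ = f ∘ₗ (e ∘ₗ (P.complex.d (n + 1) n).hom)
  rw [← LinearMap.comp_assoc, he, LinearMap.sub_comp, hb, LinearMap.comp_assoc, dd]; simp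

lemma EV_right {f : X →ₗ[B] Y} {g : Y →ₗ[B] Z} (h : IsSES f g) (n : ℕ)
    (hY : EV P n Y) (hX : EV P (n + 1) X) : EV P n Z := by
  intro a ha
  obtain ⟨a', rfl⟩ := proj_lift P _ g h.2.2 a
  obtain ⟨e, he⟩ := ker_lift h (a' ∘ₗ (P.complex.d (n + 1) n).hom) (by
    rw [← LinearMap.comp_assoc, ha])
  obtain ⟨e', he'⟩ := hX e (by
    apply ses_cancel h
    rw [← LinearMap.comp_assoc, he, LinearMap.comp_assoc, dd]; simp)
  change P.complex.X n →ₗ[B] X at e'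
  change e = e' ∘ₗ (P.complex.d (n + 1) n).hom at he'
  obtain ⟨b, hb⟩ := hY (a' - f ∘ₗ e') (by
    rw [LinearMap.sub_comp, ← he, he', LinearMap.comp_assoc, sub_self])
  refine ⟨g ∘ₗ b, ?_⟩
  rw [LinearMap.comp_assoc, ← hb, LinearMap.comp_sub, ← LinearMap.comp_assoc, ses_comp h]
  simp

lemma EV_pi (n m : ℕ) (hX : EV P n X) : EV P n (Fin m → X) := by
  intro a ha
  have := fun i => hX (LinearMap.proj i ∘ₗ a) (by
    rw [LinearMap.comp_assoc, ha, LinearMap.comp_zero])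
  choose b hb using this
  refine ⟨LinearMap.pi b, ?_⟩
  ext w i
  exact LinearMap.congr_fun (hb i) w

lemma EV_equiv (n : ℕ) (e : X ≃ₗ[B] Y) (hX : EV P n X) : EV P n Y := by
  intro a ha
  obtain ⟨b, hb⟩ := hX (e.symm.toLinearMap ∘ₗ a) (by
    rw [LinearMap.comp_assoc, ha, LinearMap.comp_zero])
  refine ⟨e.toLinearMap ∘ₗ b, ?_⟩
  rw [LinearMap.comp_assoc, ← hb]
  ext w; simp

lemma EV_zero_hom (h : EV P 0 X) : Subsingleton (k →ₗ[B] X) := by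
  refine subsingleton_of_forall_eq 0 fun f => ?_
  have hd : (P.complex.d 0 (0 - 1)).hom = 0 := by
    rw [P.complex.shape 0 (0 - 1) (by simp)]; rfl
  let p : P.complex.X 0 ⟶ k := P.π.f 0 ≫ (HomologicalComplex.singleObjXSelf _ 0 k).hom
  have hp : Epi p := inferInstance
  obtain ⟨g, hg⟩ := h (f ∘ₗ p.hom) (by
    rw [LinearMap.comp_assoc, ← ModuleCat.hom_comp]
    have : P.complex.d (0 + 1) 0 ≫ p = 0 := by
      simp only [p]
      rw [← Category.assoc]
      have h1 : P.complex.d (0 + 1) 0 ≫ P.π.f 0 = 0 := P.complex_d_comp_π_f_zero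
      rw [h1, Limits.zero_comp]
    rw [this]; simp)
  rw [hd, LinearMap.comp_zero] at hg
  have hs : Function.Surjective p := (ModuleCat.epi_iff_surjective p).mp hp
  ext w
  obtain ⟨v, rfl⟩ := hs w
  exact LinearMap.congr_fun hg v

end EVlemmas

variable {A}

lemma le_depth_iff (P : ProjectiveResolution (ModuleCat.of A (ResidueField A)))
    (M : Type u) [AddCommGroup M] [Module A M] (c : ℕ∞) :
    c ≤ depth A M ↔ ∀ i : ℕ, (i : ℕ∞) < c → EV P i M := by
  constructor
  · intro h i hi
    by_contra hc
    have : depth A M ≤ i := sInf_le ⟨i, rfl, fun hv => hc ((ext_iff_EV P i).mp hv)⟩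
    exact absurd (h.trans this) (not_le.mpr hi)
  · intro h
    refine le_sInf ?_
    rintro _ ⟨i, rfl, hi⟩
    by_contra hc
    exact hi ((ext_iff_EV P i).mpr (h i (not_le.mp hc)))

lemma depth_le_iff (P : ProjectiveResolution (ModuleCat.of A (ResidueField A)))
    (M : Type u) [AddCommGroup M] [Module A M] (n : ℕ) :
    depth A M ≤ n ↔ ∃ i : ℕ, i ≤ n ∧ ¬ EV P i M := by
  rw [← not_lt, ← Order.add_one_le_iff_of_not_isMax (by simp), le_depth_iff P]
  push Not
  refine exists_congr fun i => and_congr_left fun _ => ?_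
  norm_cast
  omega

open Pointwise in
lemma exists_not_EV [IsNoetherianRing A]
    (P : ProjectiveResolution (ModuleCat.of A (ResidueField A))) (n : ℕ) :
    ∀ (M : Type u) [AddCommGroup M] [Module A M] [Module.Finite A M] [Nontrivial M],
      Module.supportDim A M ≤ n → ∃ i : ℕ, i ≤ n ∧ ¬ EV P i M := by
  induction n with
  | zero =>
    intro M _ _ _ _ hM
    refine ⟨0, le_rfl, fun h => ?_⟩
    have h0 : Subsingleton (ResidueField A →ₗ[A] M) := EV_zero_hom P h
    obtain ⟨x, hx, reg⟩ := IsSMulRegular.subsingleton_linearMap_iff.mp h0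
    have hx : x ∈ maximalIdeal A := by
      have := Module.mem_annihilator.mp hx 1
      rw [Algebra.smul_def, mul_one] at this
      exact (residue_eq_zero_iff x).mp this
    have h1 := Module.supportDim_quotSMulTop_succ_eq_supportDim reg hx
    have hn : Nontrivial (QuotSMulTop x M) :=
      Submodule.Quotient.nontrivial_iff.mpr
        (Submodule.top_ne_pointwise_smul_of_mem_jacobson_annihilator
          (maximalIdeal_le_jacobson _ hx)).symm
    have h2 : (0 : WithBot ℕ∞) ≤ Module.supportDim A (QuotSMulTop x M) := by
      have := Module.supportDim_ne_bot_of_nontrivial A (QuotSMulTop x M)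
      revert this
      cases Module.supportDim A (QuotSMulTop x M) with
      | bot => simp
      | coe a => intro _; exact_mod_cast (bot_le : (⊥ : ℕ∞) ≤ a)
    have h3 : (0 : WithBot ℕ∞) + 1 ≤ 0 := by
      calc (0 : WithBot ℕ∞) + 1 ≤ _ := by gcongr
        _ = _ := h1
        _ ≤ _ := by simpa using hM
    exact absurd h3 (by decide)
  | succ n ih =>
    intro M _ _ _ _ hM
    by_cases h : EV P 0 M
    swap
    · exact ⟨0, by omega, h⟩
    have h0 : Subsingleton (ResidueField A →ₗ[A] M) := EV_zero_hom P h
    obtain ⟨x, hx, reg⟩ := IsSMulRegular.subsingleton_linearMap_iff.mp h0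
    have hx : x ∈ maximalIdeal A := by
      have := Module.mem_annihilator.mp hx 1
      rw [Algebra.smul_def, mul_one] at this
      exact (residue_eq_zero_iff x).mp this
    have h1 := Module.supportDim_quotSMulTop_succ_eq_supportDim reg hx
    have hn : Nontrivial (QuotSMulTop x M) :=
      Submodule.Quotient.nontrivial_iff.mpr
        (Submodule.top_ne_pointwise_smul_of_mem_jacobson_annihilator
          (maximalIdeal_le_jacobson _ hx)).symm
    have h2 : Module.supportDim A (QuotSMulTop x M) ≤ n := by
      rw [← h1] at hM
      revert hM
      cases Module.supportDim A (QuotSMulTop x M) with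
      | bot => simp
      | coe a =>
        intro hM
        have : a + 1 ≤ (n : ℕ∞) + 1 := by exact_mod_cast hM
        have : a ≤ n := (ENat.add_le_add_iff_right ENat.one_ne_top).mp this
        exact_mod_cast this
    obtain ⟨i, hi, hE⟩ := ih (QuotSMulTop x M) h2
    have hses : IsSES (LinearMap.lsmul A M x) (Submodule.mkQ (x • (⊤ : Submodule A M))) := by
      refine ⟨reg, ?_, Submodule.mkQ_surjective _⟩
      intro y
      simp [Submodule.mem_smul_pointwise_iff_exists]
    by_cases hi' : EV P i M
    · exact ⟨i + 1, by omega, fun h' => hE (EV_right P hses i hi' h')⟩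
    · exact ⟨i, by omega, hi'⟩

lemma ses_ker {X Y : Type u} [AddCommGroup X] [Module A X] [AddCommGroup Y] [Module A Y]
    (f : X →ₗ[A] Y) (hf : Function.Surjective f) : IsSES (LinearMap.ker f).subtype f := by
  refine ⟨Subtype.val_injective, ?_, hf⟩
  intro y
  simp

lemma ker_step (P : ProjectiveResolution (ModuleCat.of A (ResidueField A))) (c : ℕ∞)
    {X Y Z : Type u} [AddCommGroup X] [Module A X] [AddCommGroup Y] [Module A Y]
    [AddCommGroup Z] [Module A Z]
    {f : X →ₗ[A] Y} {g : Y →ₗ[A] Z} (h : IsSES f g) (hY : c ≤ depth A Y) (hZ : c ≤ depth A Z) :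
    c ≤ depth A X := by
  rw [le_depth_iff P] at *
  intro i hi
  cases i with
  | zero => exact EV_left_zero P h.1 (hY 0 hi)
  | succ i =>
    refine EV_left_succ P h i (hY _ hi) (hZ i (lt_of_le_of_lt ?_ hi))
    exact_mod_cast Nat.le_succ i

lemma depth_equiv (P : ProjectiveResolution (ModuleCat.of A (ResidueField A))) (c : ℕ∞)
    {X Y : Type u} [AddCommGroup X] [Module A X] [AddCommGroup Y] [Module A Y]
    (e : X ≃ₗ[A] Y) (hY : c ≤ depth A X) : c ≤ depth A Y := by
  rw [le_depth_iff P] at *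
  exact fun i hi => EV_equiv P i e (hY i hi)

lemma depth_ker (P : ProjectiveResolution (ModuleCat.of A (ResidueField A))) (c : ℕ∞)
    {M : Type u} [AddCommGroup M] [Module A M]
    (hA : c ≤ depth A A) (hM : c ≤ depth A M) (R : MinFreeRes A M) :
    c ≤ depth A (LinearMap.ker R.aug) ∧ ∀ n, c ≤ depth A (LinearMap.ker (R.d n)) := by
  have hF : ∀ m, c ≤ depth A (Fin m → A) := by
    intro m
    rw [le_depth_iff P] at *
    exact fun i hi => EV_pi P i m (hA i hi)
  have h0 : c ≤ depth A (LinearMap.ker R.aug) :=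
    ker_step P c (ses_ker R.aug R.aug_surjective) (hF _) hM
  have key : ∀ n, c ≤ depth A (LinearMap.range (R.d n)) → c ≤ depth A (LinearMap.ker (R.d n)) := by
    intro n hn
    have hs := ses_ker (R.d n).rangeRestrict (R.d n).surjective_rangeRestrict
    rw [LinearMap.ker_rangeRestrict] at hs
    exact ker_step P c hs (hF _) hn
  refine ⟨h0, fun n => ?_⟩
  induction n with
  | zero =>
    apply key
    rw [← LinearMap.exact_iff.mp R.exact_zero]
    exact h0
  | succ n ih =>
    apply key
    rw [← LinearMap.exact_iff.mp (R.exact_succ n)]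
    exact ih

lemma depth_syz (P : ProjectiveResolution (ModuleCat.of A (ResidueField A))) (c : ℕ∞)
    {M : Type u} [AddCommGroup M] [Module A M] {S : Type u} [AddCommGroup S] [Module A S]
    (hA : c ≤ depth A A) (hM : c ≤ depth A M) (n : ℕ) (h : IsSyzygyOf A M S n) :
    c ≤ depth A S := by
  match n, h with
  | 0, ⟨e⟩ => exact depth_equiv P c e.symm hM
  | 1, ⟨R, ⟨e⟩⟩ => exact depth_equiv P c e.symm (depth_ker P c hA hM R).1
  | n + 2, ⟨R, ⟨e⟩⟩ => exact depth_equiv P c e.symm ((depth_ker P c hA hM R).2 n)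

lemma depth_mid (P : ProjectiveResolution (ModuleCat.of A (ResidueField A)))
    {M K S : Type u} [AddCommGroup M] [Module A M] [AddCommGroup K] [Module A K]
    [AddCommGroup S] [Module A S] {f : M →ₗ[A] K} {g : K →ₗ[A] S} (h : IsSES f g)
    (hS : depth A M ≤ depth A S) : depth A K = depth A M := by
  apply le_antisymm
  · refine ENat.forall_natCast_le_iff_le.mp fun t ht => ?_
    rw [le_depth_iff P] at ht ⊢
    intro i
    induction i using Nat.strong_induction_on with
    | _ i ih =>
      intro hi
      have hi' : ∀ j, j < i → EV P j M := fun j hj =>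
        ih j hj (lt_trans (by exact_mod_cast hj) hi)
      cases i with
      | zero => exact EV_left_zero P h.1 (ht 0 hi)
      | succ i =>
        refine EV_left_succ P h i (ht _ hi) ?_
        have h1 : ((i + 1 : ℕ) : ℕ∞) ≤ depth A M :=
          (le_depth_iff P M _).mpr fun j hj => hi' j (by exact_mod_cast hj)
        exact (le_depth_iff P S _).mp (h1.trans hS) i (by exact_mod_cast Nat.lt_succ_self i)
  · rw [le_depth_iff P]
    intro i hi
    exact EV_mid P h i ((le_depth_iff P M _).mp le_rfl i hi) ((le_depth_iff P S _).mp hS i hi)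

lemma depth_le_dim [IsNoetherianRing A]
    (P : ProjectiveResolution (ModuleCat.of A (ResidueField A)))
    (M : Type u) [AddCommGroup M] [Module A M] [Module.Finite A M] [Nontrivial M] :
    (depth A M : WithBot ℕ∞) ≤ ringKrullDim A := by
  have h1 : Module.supportDim A M ≤ ringKrullDim A := Module.supportDim_le_ringKrullDim A M
  have hfin : ringKrullDim A < ⊤ := ringKrullDim_lt_top
  have hbot : ringKrullDim A ≠ ⊥ := ringKrullDim_ne_bot
  obtain ⟨n, hn⟩ : ∃ n : ℕ, ringKrullDim A = (n : WithBot ℕ∞) := by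
    revert hfin hbot
    cases ringKrullDim A with
    | bot => simp
    | coe a =>
      intro h _
      have : a ≠ ⊤ := by rintro rfl; exact absurd h (lt_irrefl _)
      obtain ⟨n, rfl⟩ := ENat.ne_top_iff_exists.mp this
      exact ⟨n, rfl⟩
  rw [hn] at h1 ⊢
  have := (depth_le_iff P M n).mpr (exists_not_EV P n M h1)
  exact_mod_cast this

/-- The zero module has finite projective dimension. -/
lemma finProj_of_subsingleton (M : Type u) [AddCommGroup M] [Module A M] [Subsingleton M] :
    HasFiniteProjDim A M := by
  refine ⟨0, ⟨fun _ => 0, fun _ => 0, 0, fun x => ⟨0, Subsingleton.elim _ _⟩, ?_, ?_, ?_⟩,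
    fun _ _ => rfl⟩
  · intro x; exact ⟨fun _ => ⟨0, Subsingleton.elim _ _⟩, fun _ => Subsingleton.elim _ _⟩
  · intro n x; exact ⟨fun _ => ⟨0, Subsingleton.elim _ _⟩, fun _ => Subsingleton.elim _ _⟩
  · intro n x i; exact i.elim0

lemma frc_of_rc (M : ModuleCat.{u} A) (h : HasRedCxCat M) : HasFreeRedCxCat M := by
  induction h with
  | of_finite_projDim M hfg h => exact .of_finite_projDim M hfg h
  | step M K S n hfg hKfg hpos hfin hsyz f g hses hcx hdepth hK ih =>
    exact .step M K S n hfg hKfg hpos hfin hsyz f g hses hcx ih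

lemma rc_of_frc [IsNoetherianRing A] (hCM : (depth A A : WithBot ℕ∞) = ringKrullDim A)
    (M : ModuleCat.{u} A) (h : HasFreeRedCxCat M) : HasRedCxCat M := by
  have P : ProjectiveResolution (ModuleCat.of A (ResidueField A)) := projectiveResolution _
  induction h with
  | of_finite_projDim M hfg h => exact .of_finite_projDim M hfg h
  | step M K S n hfg hKfg hpos hfin hsyz f g hses hcx hK ih =>
    rcases subsingleton_or_nontrivial M with hM | hM
    · exact .of_finite_projDim M hfg (finProj_of_subsingleton M)
    · refine .step M K S n hfg hKfg hpos hfin hsyz f g hses hcx ?_ ih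
      have hle : depth A M ≤ depth A A := by
        have := depth_le_dim P M
        rw [← hCM] at this
        exact_mod_cast this
      exact depth_mid P hses (depth_syz P _ hle le_rfl n hsyz)

end ComplexityTest

open ComplexityTest

/-- Over a Cohen-Macaulay local ring (i.e. `depth A = dim A`), a finitely generated
module has reducible complexity if and only if it has free reducible complexity: the
categories `C^rc_A` and `C^frc_A` coincide. -/
theorem hasRedCx_iff_hasFreeRedCx_of_cohenMacaulay
    (A : Type u) [CommRing A] [IsLocalRing A] [IsNoetherianRing A]
    (hCM : (depth A A : WithBot ℕ∞) = ringKrullDim A) :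
    ∀ (M : Type u) [AddCommGroup M] [Module A M] [Module.Finite A M],
      HasRedCx A M ↔ HasFreeRedCx A M := by
  intro M _ _ _
  exact ⟨frc_of_rc _, rc_of_frc hCM _⟩
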